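/- Let ℍ be the hyperbolic plane on which SL(2,ℝ) acts by Möbius isometries, and let ε > 0 be a Margulis constant for ℍ, i.e. assume: for every discrete subgroup Δ of SL(2,ℝ) and every x ∈ ℍ, the subgroup of Δ generated by {γ ∈ Δ : dist(x, γ·x) ≤ ε} is virtually abelian. Then there exists K ∈ ℕ with the following property. Let g, h ∈ SL(2,ℝ) be non-elliptic (|trace| ≥ 2 and not equal to ±identity) with translation length τ(g) := ⨅_{x∈ℍ} dist(x, g·x) ≤ ε/10, and suppose the subgroup of SL(2,ℝ) generated by g and h is discrete and not virtually abelian. Then there exists an integer i with 1 ≤ i ≤ K such that the images of g and h^i g h^{−i} in PSL(2,ℝ) generate a free group of rank two (the homomorphism from the free group on two generators to PSL(2,ℝ) determined by g and h^i g h^{−i} is injective). -/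

import Mathlib

open UpperHalfPlane

/-- `SL(2,ℝ)`. -/
abbrev SL2R := Matrix.SpecialLinearGroup (Fin 2) ℝ

/-- A group is virtually abelian if it has an abelian finite-index subgroup. -/
def VirtuallyAbelian (G : Type*) [Group G] : Prop :=
  ∃ H : Subgroup G, H.FiniteIndex ∧ ∀ a ∈ H, ∀ b ∈ H, a * b = b * a

/-- A subgroup of `SL(2,ℝ)` is discrete if the identity is isolated in it. -/
def IsDiscreteSubgroup (Γ : Subgroup SL2R) : Prop :=
  ∃ U : Set (Matrix (Fin 2) (Fin 2) ℝ), IsOpen U ∧ (1 : Matrix (Fin 2) (Fin 2) ℝ) ∈ U ∧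
    ∀ γ ∈ Γ, (γ : Matrix (Fin 2) (Fin 2) ℝ) ∈ U → γ = 1

/-- `ε` is a Margulis constant for `ℍ`: for every discrete subgroup `Δ ≤ SL(2,ℝ)` and
every `x ∈ ℍ`, the subgroup generated by the elements of `Δ` moving `x` at most `ε` is
virtually abelian. -/
def IsMargulisConstant (ε : ℝ) : Prop :=
  ∀ Δ : Subgroup SL2R, IsDiscreteSubgroup Δ → ∀ x : UpperHalfPlane,
    VirtuallyAbelian ↥(Subgroup.closure {γ : SL2R | γ ∈ Δ ∧ dist x (γ • x) ≤ ε})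

/-- An element of `SL(2,ℝ)` is non-elliptic iff `|trace| ≥ 2` and it is not `±1`. -/
def NonElliptic (g : SL2R) : Prop :=
  2 ≤ |Matrix.trace (g : Matrix (Fin 2) (Fin 2) ℝ)| ∧
    (g : Matrix (Fin 2) (Fin 2) ℝ) ≠ 1 ∧ (g : Matrix (Fin 2) (Fin 2) ℝ) ≠ -1

/-- The translation length of `g ∈ SL(2,ℝ)` acting on `ℍ`. -/
noncomputable def translationLength (g : SL2R) : ℝ :=
  ⨅ x : UpperHalfPlane, dist x (g • x)

/-!
Let `Δ = det (gh - hg)` and `k = hgh⁻¹`, so that `tr k = tr g`, `tr (gk) = (tr g)² - 2 + Δ` and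
`tr (gk⁻¹) = 2 - Δ`. As soon as `|Δ| ≥ (tr g)²`, one of the two products has trace at most `-2`;
conjugating the pair to an upper and a lower triangular matrix with the same diagonal, ping-pong on
hyperbolic half-planes shows that `g` and `k` generate a free group.

By Cayley–Hamilton, replacing `h` by `hⁱ` multiplies `gh - hg` by the value at `tr h` of a Chebyshev
polynomial, which is at least `i` in absolute value because `|tr h| ≥ 2`. So `Δ` grows at least like
`i²`, and only a uniform lower bound for `|Δ|` is missing. Scaling the triangular pair so that the
off-diagonal entries have equal size exhibits a point which `g` and `k` both move by the distance
`d` with `2 cosh d = (tr g)² - 2 + |Δ|`. As `g` and `k` generate no virtually abelian group, the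
Margulis constant gives `d > ε`, whereas `τ(g) ≤ ε / 10` bounds `(tr g)² - 2` by `2 cosh (ε / 10)`.
-/

local notation "M₂" => Matrix (Fin 2) (Fin 2)

section FreeGroups

variable {α G H : Type*} [Group G] [Group H]

theorem injective_lift_of_comp (φ : G →* H) {f : α → G}
    (hf : Function.Injective (FreeGroup.lift (φ ∘ f))) :
    Function.Injective (FreeGroup.lift f) := by
  have hφ : FreeGroup.lift (φ ∘ f) = φ.comp (FreeGroup.lift f) := by ext; simp
  rw [hφ, MonoidHom.coe_comp] at hf
  exact hf.of_comp

theorem injective_lift_pair_of_conj {P a b : G}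
    (h : Function.Injective (FreeGroup.lift ![P⁻¹ * a * P, P⁻¹ * b * P])) :
    Function.Injective (FreeGroup.lift ![a, b]) := by
  refine injective_lift_of_comp (MulAut.conj P⁻¹).toMonoidHom ?_
  convert h using 3
  ext i
  fin_cases i <;> simp

theorem injective_lift_pair_of_inv {a b : G}
    (h : Function.Injective (FreeGroup.lift ![a, b⁻¹])) :
    Function.Injective (FreeGroup.lift ![a, b]) := by
  let σ : FreeGroup (Fin 2) →* FreeGroup (Fin 2) :=
    FreeGroup.lift ![FreeGroup.of 0, (FreeGroup.of 1)⁻¹]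
  have hσ : Function.Involutive σ := by
    refine DFunLike.congr_fun (f := σ.comp σ) (g := MonoidHom.id _) ?_
    ext i
    fin_cases i <;> simp [σ]
  have hcomp : FreeGroup.lift ![a, b] = (FreeGroup.lift ![a, b⁻¹]).comp σ := by
    ext i
    fin_cases i <;> simp [σ]
  rw [hcomp, MonoidHom.coe_comp]
  exact h.comp hσ.injective

theorem injective_comp_of_isOfFinOrder_ker {F : Type*} [Group F] [IsMulTorsionFree F]
    {φ : G →* H} (hφ : ∀ x ∈ φ.ker, IsOfFinOrder x) {ψ : F →* G} (hψ : Function.Injective ψ) :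
    Function.Injective (φ.comp ψ) := by
  refine (injective_iff_map_eq_one _).2 fun w hw ↦ ?_
  exact ((hψ.isOfFinOrder_iff (f := ψ)).1 (hφ _ hw)).eq_one'

-- `G : Type` because `FreeGroup.injective_lift_of_ping_pong` puts `G` in the universe of `Fin 2`.
open scoped Pointwise in
theorem injective_lift_pair_of_ping_pong {G : Type} [Group G] {Ω : Type*} [MulAction G Ω] {a b : G}
    {XA YA XB YB : Set Ω} (hXA : XA.Nonempty) (hXB : XB.Nonempty)
    (hAA : Disjoint XA YA) (hBB : Disjoint XB YB) (hX : Disjoint XA XB) (hY : Disjoint YA YB)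
    (hAB : Disjoint XA YB) (hBA : Disjoint XB YA)
    (ha : a • YAᶜ ⊆ XA) (hb : b • YBᶜ ⊆ XB) :
    Function.Injective (FreeGroup.lift ![a, b]) := by
  have smul_inv_compl_subset {c : G} {X Y : Set Ω} (h : c • Yᶜ ⊆ X) : c⁻¹ • Xᶜ ⊆ Y := by
    rwa [← Set.compl_subset_compl, ← Set.smul_set_compl, compl_compl, Set.subset_smul_set_iff,
      inv_inv]
  apply FreeGroup.injective_lift_of_ping_pong (α := Ω) ![a, b] ![XA, XB] (Y := ![YA, YB])
  · simp [Fin.forall_fin_two, hXA, hXB]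
  · simp [Pairwise, Fin.forall_fin_two, Function.onFun, hX, hX.symm]
  · simp [Pairwise, Fin.forall_fin_two, Function.onFun, hY, hY.symm]
  · simp [Fin.forall_fin_two, hAA, hBB, hAB, hBA]
  · simp [Fin.forall_fin_two, ha, hb]
  · simp [Fin.forall_fin_two, smul_inv_compl_subset ha, smul_inv_compl_subset hb]

end FreeGroups

section Center

variable {n R : Type*} [Fintype n] [DecidableEq n] [Nonempty n] [CommRing R]

theorem isOfFinOrder_of_mem_center_specialLinearGroup {A : Matrix.SpecialLinearGroup n R}
    (hA : A ∈ Subgroup.center (Matrix.SpecialLinearGroup n R)) : IsOfFinOrder A := by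
  obtain ⟨r, hr, hrA⟩ := Matrix.SpecialLinearGroup.mem_center_iff.1 hA
  refine isOfFinOrder_iff_pow_eq_one.2 ⟨Fintype.card n, Fintype.card_pos, Subtype.ext ?_⟩
  rw [Matrix.SpecialLinearGroup.coe_pow, ← hrA, ← map_pow, hr, map_one,
    Matrix.SpecialLinearGroup.coe_one]

theorem injective_lift_mk_center_of_injective_lift {a b : Matrix.SpecialLinearGroup n R}
    (h : Function.Injective (FreeGroup.lift ![a, b])) :
    Function.Injective (FreeGroup.lift
      ![QuotientGroup.mk' (Subgroup.center (Matrix.SpecialLinearGroup n R)) a,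
        QuotientGroup.mk' (Subgroup.center (Matrix.SpecialLinearGroup n R)) b]) := by
  convert injective_comp_of_isOfFinOrder_ker
    (φ := QuotientGroup.mk' (Subgroup.center (Matrix.SpecialLinearGroup n R)))
    (fun x hx ↦ isOfFinOrder_of_mem_center_specialLinearGroup
      (by rwa [QuotientGroup.ker_mk'] at hx)) h
  ext i
  fin_cases i <;> simp

end Center

section TraceIdentities

open Matrix Polynomial

variable {R : Type*} [CommRing R]

theorem det_lie_of_det_eq_one {A B : M₂ R} (hA : A.det = 1) (hB : B.det = 1) :
    ⁅A, B⁆.det = 4 - A.trace ^ 2 - B.trace ^ 2 - (A * B).trace ^ 2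
      + A.trace * B.trace * (A * B).trace := by
  have hlie : ⁅A, B⁆.det = 4 * A.det * B.det - A.trace ^ 2 * B.det - B.trace ^ 2 * A.det
      - (A * B).trace ^ 2 + A.trace * B.trace * (A * B).trace := by
    simp only [Ring.lie_def, det_fin_two, trace_fin_two, Matrix.sub_apply, mul_apply,
      Fin.sum_univ_two]
    ring
  rw [hlie, hA, hB]
  ring

theorem det_lie_of_trace_eq {A B : M₂ R} (hA : A.det = 1) (hB : B.det = 1)
    (htr : A.trace = B.trace) :
    ⁅A, B⁆.det = ((A * B).trace - 2) * (A.trace ^ 2 - 2 - (A * B).trace) := by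
  rw [det_lie_of_det_eq_one hA hB, ← htr]
  ring

theorem trace_conj_inv {n : Type*} [Fintype n] [DecidableEq n]
    (g P : Matrix.SpecialLinearGroup n R) :
    (↑(P⁻¹ * g * P) : Matrix n n R).trace = (g : Matrix n n R).trace := by
  rw [Matrix.SpecialLinearGroup.coe_mul, trace_mul_comm, ← Matrix.SpecialLinearGroup.coe_mul,
    mul_inv_cancel_left]

theorem trace_conj {n : Type*} [Fintype n] [DecidableEq n] (g P : Matrix.SpecialLinearGroup n R) :
    (↑(P * g * P⁻¹) : Matrix n n R).trace = (g : Matrix n n R).trace := by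
  simpa using trace_conj_inv g P⁻¹

theorem mul_self_eq_trace_smul_sub_one {A : M₂ R} (hA : A.det = 1) : A * A = A.trace • A - 1 := by
  nontriviality R
  have h := aeval_self_charpoly A
  simp only [charpoly_fin_two, hA, map_add, map_sub, map_mul, map_pow, aeval_X, aeval_C, map_one,
    ← Algebra.smul_def] at h
  rw [← sq, ← sub_eq_zero, ← h]
  abel

theorem trace_mul_conj (g h : Matrix.SpecialLinearGroup (Fin 2) R) :
    (↑(g * (h * g * h⁻¹)) : M₂ R).trace
      = (g : M₂ R).trace ^ 2 - 2 + ⁅(g : M₂ R), (h : M₂ R)⁆.det := by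
  have key (A B : M₂ R) : (A * (B * A * B.adjugate)).trace =
      A.trace ^ 2 * B.det - 2 * A.det * B.det + ⁅A, B⁆.det := by
    simp only [Ring.lie_def, adjugate_fin_two, det_fin_two, trace_fin_two, Matrix.sub_apply,
      mul_apply, Fin.sum_univ_two, of_apply, cons_val', cons_val_zero, cons_val_one,
      cons_val_fin_one]
    ring
  simpa using key g h

theorem trace_mul_inv_conj (g h : Matrix.SpecialLinearGroup (Fin 2) R) :
    (↑(g * (h * g * h⁻¹)⁻¹) : M₂ R).trace = 2 - ⁅(g : M₂ R), (h : M₂ R)⁆.det := by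
  have key (A B : M₂ R) : (A * (B * (A.adjugate * B.adjugate))).trace =
      2 * A.det * B.det - ⁅A, B⁆.det := by
    simp only [Ring.lie_def, adjugate_fin_two, det_fin_two, trace_fin_two, Matrix.sub_apply,
      mul_apply, Fin.sum_univ_two, of_apply, cons_val', cons_val_zero, cons_val_one,
      cons_val_fin_one]
    ring
  simpa [conj_inv] using key g h

theorem pow_succ_eq_chebyshev {A : M₂ R} (hA : A.det = 1) (n : ℕ) :
    A ^ (n + 1) = (Chebyshev.S R n).eval A.trace • A
      - (Chebyshev.S R (n - 1)).eval A.trace • (1 : M₂ R) := by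
  induction n with
  | zero => simp
  | succ n ih =>
    rw [pow_succ, ih, sub_mul, smul_mul_assoc, mul_self_eq_trace_smul_sub_one hA]
    simp only [Nat.cast_add, Nat.cast_one, add_sub_cancel_right, Chebyshev.S_add_one, eval_sub,
      eval_mul, eval_X, smul_mul_assoc, one_mul]
    module

theorem lie_pow_succ (A : M₂ R) {B : M₂ R} (hB : B.det = 1) (n : ℕ) :
    ⁅A, B ^ (n + 1)⁆ = (Chebyshev.S R n).eval B.trace • ⁅A, B⁆ := by
  simp [pow_succ_eq_chebyshev hB, Ring.lie_def, mul_sub, sub_mul, smul_sub]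

theorem det_lie_pow_succ (A : M₂ R) {B : M₂ R} (hB : B.det = 1) (n : ℕ) :
    ⁅A, B ^ (n + 1)⁆.det = (Chebyshev.S R n).eval B.trace ^ 2 * ⁅A, B⁆.det := by
  rw [lie_pow_succ A hB, det_smul, Fintype.card_fin]

theorem mul_lie_mul_self {A : M₂ R} (hA : A.det = 1) (B : M₂ R) :
    A * ⁅A, B⁆ * A = ⁅A, B⁆ := by
  calc A * ⁅A, B⁆ * A = (A * A) * (B * A) - (A * B) * (A * A) := by
        rw [Ring.lie_def]; noncomm_ring
    _ = ⁅A, B⁆ := by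
        rw [mul_self_eq_trace_smul_sub_one hA, Ring.lie_def]
        simp [sub_mul, mul_sub, mul_assoc]

theorem succ_le_abs_eval_chebyshev_S {t : ℝ} (ht : 2 ≤ |t|) (n : ℕ) :
    (n + 1 : ℝ) ≤ |(Chebyshev.S ℝ n).eval t| := by
  suffices |(Chebyshev.S ℝ (n - 1)).eval t| + 1 ≤ |(Chebyshev.S ℝ n).eval t| ∧
      (n + 1 : ℝ) ≤ |(Chebyshev.S ℝ n).eval t| from this.2
  induction n with
  | zero => simp
  | succ n ih =>
    obtain ⟨hstep, hn⟩ := ih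
    set a := (Chebyshev.S ℝ n).eval t
    set b := (Chebyshev.S ℝ (n - 1)).eval t
    have hrec : (Chebyshev.S ℝ (n + 1)).eval t = t * a - b := by
      simp [Chebyshev.S_add_one, a, b]
    have hlow : |t| * |a| - |b| ≤ |t * a - b| := by
      rw [← abs_mul]; exact abs_sub_abs_le_abs_sub _ _
    have hmul : 2 * |a| ≤ |t| * |a| := by gcongr
    push_cast
    rw [add_sub_cancel_right, hrec]
    constructor <;> linarith

end TraceIdentities

section Eigenvectors

open Matrix

theorem det_lie_eq_zero_of_common_eigenvector {n R : Type*} [Fintype n] [DecidableEq n] [CommRing R]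
    [IsDomain R] {A B : Matrix n n R} {v : n → R} (hv : v ≠ 0) {a b : R} (hA : A *ᵥ v = a • v)
    (hB : B *ᵥ v = b • v) : ⁅A, B⁆.det = 0 := by
  refine exists_mulVec_eq_zero_iff.1 ⟨v, hv, ?_⟩
  rw [Ring.lie_def, sub_mulVec, ← mulVec_mulVec, ← mulVec_mulVec, hA, hB, mulVec_smul, mulVec_smul,
    hA, hB, smul_comm, sub_self]

theorem exists_eigenvector_of_trace_eq {R : Type*} [CommRing R] [IsDomain R] {A : M₂ R} {a b : R}
    (hdet : A.det = a * b) (htr : A.trace = a + b) : ∃ v, v ≠ 0 ∧ A *ᵥ v = a • v := by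
  obtain ⟨v, hv, h⟩ : ∃ v, v ≠ 0 ∧ (A - a • 1) *ᵥ v = 0 := by
    rw [exists_mulVec_eq_zero_iff]
    rw [det_fin_two, trace_fin_two] at *
    simp only [Matrix.sub_apply, Matrix.smul_apply, one_apply_eq, smul_eq_mul, mul_one, ne_eq,
      zero_ne_one, one_ne_zero, not_false_eq_true, one_apply_ne, mul_zero, sub_zero]
    linear_combination hdet - a * htr
  rw [sub_mulVec, smul_mulVec, one_mulVec, sub_eq_zero] at h
  exact ⟨v, hv, h⟩

variable {K : Type*} [Field K]

theorem exists_smul_eq_of_mulVec_eq_zero {N : M₂ K} (hN : N ≠ 0) {v w : Fin 2 → K} (hv : v ≠ 0)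
    (hNv : N *ᵥ v = 0) (hNw : N *ᵥ w = 0) : ∃ c : K, c • v = w := by
  by_contra! h
  have hspan := ((LinearIndependent.pair_iff' hv).2 h).span_eq_top_of_card_eq_finrank' (by simp)
  refine hN (Matrix.toLin'.injective (LinearMap.ext_on_range hspan fun i ↦ ?_))
  fin_cases i <;> simp [hNv, hNw]

theorem exists_mulVec_eq_smul_of_lie_mulVec_eq_zero {A B : M₂ K} (hA : A.det = 1)
    (hN : ⁅A, B⁆ ≠ 0) {v : Fin 2 → K} (hv : v ≠ 0) (hNv : ⁅A, B⁆ *ᵥ v = 0) :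
    ∃ a : K, A *ᵥ v = a • v := by
  have hANAv : A *ᵥ (⁅A, B⁆ *ᵥ (A *ᵥ v)) = 0 := by
    rwa [mulVec_mulVec, mulVec_mulVec, mul_lie_mul_self hA B]
  have hNAv : ⁅A, B⁆ *ᵥ (A *ᵥ v) = 0 :=
    eq_zero_of_mulVec_eq_zero (by simp [hA]) hANAv
  obtain ⟨a, ha⟩ := exists_smul_eq_of_mulVec_eq_zero hN hv hNv hNAv
  exact ⟨a, ha.symm⟩

theorem commute_or_exists_common_eigenvector {A B : M₂ K} (hA : A.det = 1) (hB : B.det = 1)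
    (h : ⁅A, B⁆.det = 0) :
    Commute A B ∨ ∃ v ≠ 0, ∃ a b : K, A *ᵥ v = a • v ∧ B *ᵥ v = b • v := by
  by_cases hN : ⁅A, B⁆ = 0
  · exact .inl (sub_eq_zero.1 hN)
  · have hBA : ⁅B, A⁆ = -⁅A, B⁆ := (neg_sub _ _).symm
    obtain ⟨v, hv, hNv⟩ := exists_mulVec_eq_zero_iff.2 h
    obtain ⟨a, ha⟩ := exists_mulVec_eq_smul_of_lie_mulVec_eq_zero hA hN hv hNv
    obtain ⟨b, hb⟩ := exists_mulVec_eq_smul_of_lie_mulVec_eq_zero (A := B) (B := A) hB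
      (by rwa [hBA, neg_ne_zero]) hv (by rw [hBA, neg_mulVec, hNv, neg_zero])
    exact .inr ⟨v, hv, a, b, ha, hb⟩

theorem exists_specialLinearGroup_mulVec_eq {v w : Fin 2 → K} (hv : v ≠ 0)
    (hvw : ∀ c : K, c • v ≠ w) : ∃ (P : Matrix.SpecialLinearGroup (Fin 2) K) (c : K),
      (P : M₂ K) *ᵥ ![1, 0] = v ∧ (P : M₂ K) *ᵥ ![0, 1] = c • w := by
  set d := v 0 * w 1 - w 0 * v 1 with hd_def
  have hd : d ≠ 0 := by
    intro hd
    set N : M₂ K := !![-v 1, v 0; 0, 0]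
    have hN : N ≠ 0 := by
      refine fun hN ↦ hv (funext fun i ↦ ?_)
      fin_cases i
      · simpa [N] using congr_fun₂ hN 0 1
      · simpa [N] using congr_fun₂ hN 0 0
    have hNu (u : Fin 2 → K) : N *ᵥ u = ![v 0 * u 1 - u 0 * v 1, 0] := by
      ext i
      fin_cases i <;> simp [N, mulVec, dotProduct, mul_comm, neg_add_eq_sub]
    obtain ⟨c, hc⟩ := exists_smul_eq_of_mulVec_eq_zero (w := w) hN hv
      (by simp [hNu]) (by simp [hNu, ← hd_def, hd])
    exact hvw c hc
  refine ⟨⟨!![v 0, d⁻¹ * w 0; v 1, d⁻¹ * w 1], ?_⟩, d⁻¹, ?_, ?_⟩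
  · rw [det_fin_two_of]
    linear_combination d⁻¹ * hd_def.symm + inv_mul_cancel₀ hd
  · ext i
    fin_cases i <;> simp
  · ext i
    fin_cases i <;> simp

theorem conj_mulVec_eq_smul {n R : Type*} [Fintype n] [DecidableEq n] [CommRing R]
    {g P : Matrix.SpecialLinearGroup n R} {v : n → R} {a : R}
    (h : (g : Matrix n n R) *ᵥ ((P : Matrix n n R) *ᵥ v) = a • ((P : Matrix n n R) *ᵥ v)) :
    (↑(P⁻¹ * g * P) : Matrix n n R) *ᵥ v = a • v := by
  rw [Matrix.SpecialLinearGroup.coe_mul, Matrix.SpecialLinearGroup.coe_mul, ← mulVec_mulVec,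
    ← mulVec_mulVec, h, mulVec_smul, mulVec_mulVec, Matrix.SpecialLinearGroup.coe_inv, adjugate_mul]
  simp

theorem eq_upper_of_mulVec_eq {R : Type*} [CommRing R] {A : M₂ R} {a b : R}
    (h : A *ᵥ ![1, 0] = a • ![1, 0])
    (htr : A.trace = a + b) : A = !![a, A 0 1; 0, b] := by
  have h0 : A 0 0 = a := by simpa using congr_fun h 0
  have h1 : A 1 0 = 0 := by simpa using congr_fun h 1
  rw [trace_fin_two, h0, add_right_inj] at htr
  rw [eta_fin_two A, h0, h1, htr]
  simp

theorem eq_lower_of_mulVec_eq {R : Type*} [CommRing R] {A : M₂ R} {a b : R}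
    (h : A *ᵥ ![0, 1] = b • ![0, 1])
    (htr : A.trace = a + b) : A = !![a, 0; A 1 0, b] := by
  have h0 : A 0 1 = 0 := by simpa using congr_fun h 0
  have h1 : A 1 1 = b := by simpa using congr_fun h 1
  rw [trace_fin_two, h1, add_left_inj] at htr
  rw [eta_fin_two A, h0, h1, htr]
  simp

theorem exists_conj_eq_upper_lower {g k : Matrix.SpecialLinearGroup (Fin 2) K} {α : K} (hα : α ≠ 0)
    (hg : (g : M₂ K).trace = α + α⁻¹) (hk : (k : M₂ K).trace = α + α⁻¹)
    (hgk : ⁅(g : M₂ K), (k : M₂ K)⁆.det ≠ 0) :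
    ∃ (P : Matrix.SpecialLinearGroup (Fin 2) K) (β δ : K),
      ↑(P⁻¹ * g * P) = !![α, β; 0, α⁻¹] ∧ ↑(P⁻¹ * k * P) = !![α, 0; δ, α⁻¹] := by
  obtain ⟨v, hv, hgv⟩ := exists_eigenvector_of_trace_eq (by simp [hα]) hg
  obtain ⟨w, hw, hkw⟩ := exists_eigenvector_of_trace_eq (a := α⁻¹) (by simp [hα])
    (hk.trans (add_comm _ _))
  have hvw (c : K) : c • v ≠ w := by
    rintro rfl
    exact hgk (det_lie_eq_zero_of_common_eigenvector hw (by rw [mulVec_smul, hgv, smul_comm]) hkw)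
  obtain ⟨P, c, hPv, hPw⟩ := exists_specialLinearGroup_mulVec_eq hv hvw
  refine ⟨P, _, _, eq_upper_of_mulVec_eq (conj_mulVec_eq_smul ?_) ((trace_conj_inv g P).trans hg),
    eq_lower_of_mulVec_eq (conj_mulVec_eq_smul ?_) ((trace_conj_inv k P).trans hk)⟩
  · rw [hPv, hgv]
  · rw [hPw, mulVec_smul, hkw, smul_comm]

end Eigenvectors

section PingPong

theorem re_mul_re_inv_mem_Icc (w : ℂ) : w.re * (w⁻¹).re ∈ Set.Icc 0 1 := by
  have hre : w.re * (w⁻¹).re = w.re * w.re / Complex.normSq w := by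
    rw [Complex.inv_re, mul_div_assoc]
  have hle : w.re * w.re ≤ Complex.normSq w := by
    rw [Complex.normSq_apply]
    exact le_add_of_nonneg_right (mul_self_nonneg _)
  rw [hre]
  exact ⟨div_nonneg (mul_self_nonneg _) (Complex.normSq_nonneg w),
    div_le_one_of_le₀ hle (Complex.normSq_nonneg w)⟩

open scoped Pointwise in
theorem injective_lift_pair_of_re_smul {G : Type} [Group G] {Ω : Type*} [MulAction G Ω] {a b : G}
    (p : Ω → ℂ) {x : Ω} (hx : (p x).re = 0) {s : ℝ} (hs : 0 < s)
    (ha : ∀ z, -s⁻¹ ≤ (p z).re → s⁻¹ ≤ (p (a • z)).re)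
    (hb : ∀ z, (p z)⁻¹.re ≤ s → (p (b • z))⁻¹.re ≤ -s) :
    Function.Injective (FreeGroup.lift ![a, b]) := by
  have hs' : 0 < s⁻¹ := inv_pos.2 hs
  have hss : s⁻¹ * s = 1 := inv_mul_cancel₀ hs.ne'
  let XA : Set Ω := {z | s⁻¹ ≤ (p z).re}
  let YA : Set Ω := {z | (p z).re < -s⁻¹}
  let XB : Set Ω := {z | (p z)⁻¹.re ≤ -s}
  let YB : Set Ω := {z | s < (p z)⁻¹.re}
  have disjoint_of {X Y : Set Ω} (hXY : ∀ z ∈ X, z ∈ Y → (p z).re * (p z)⁻¹.re ∉ Set.Icc 0 1) :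
      Disjoint X Y :=
    Set.disjoint_left.2 fun z hX hY ↦ hXY z hX hY (re_mul_re_inv_mem_Icc _)
  refine injective_lift_pair_of_ping_pong (XA := XA) (YA := YA) (XB := XB) (YB := YB)
    ⟨_, ha x (by simp [hx, hs.le])⟩ ⟨_, hb x (by simp [hx, hs.le])⟩
    ?_ ?_ (disjoint_of fun z hA hB hz ↦ ?_) (disjoint_of fun z hA hB hz ↦ ?_)
    (disjoint_of fun z hA hB hz ↦ ?_) (disjoint_of fun z hB hA hz ↦ ?_)
    (Set.smul_set_subset_iff.2 fun z hz ↦ ha z (not_lt.1 hz))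
    (Set.smul_set_subset_iff.2 fun z hz ↦ hb z (not_lt.1 hz))
  · exact Set.disjoint_left.2 fun z hX hY ↦ by rw [Set.mem_ofPred_eq] at hX hY; linarith
  · exact Set.disjoint_left.2 fun z hX hY ↦ by rw [Set.mem_ofPred_eq] at hX hY; linarith
  all_goals rw [Set.mem_ofPred_eq] at hA hB
  · nlinarith [hz.1]
  · nlinarith [hz.1]
  · nlinarith [hz.2]
  · nlinarith [hz.2]

variable {a b : SL2R} {α β δ : ℝ}

theorem coe_smul_of_eq_upper (hα : α ≠ 0) (ha : (a : M₂ ℝ) = !![α, β; 0, α⁻¹]) (z : ℍ) :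
    ((a • z : ℍ) : ℂ) = (α : ℂ) ^ 2 * z + α * β := by
  have hα' : (α : ℂ) ≠ 0 := by exact_mod_cast hα
  rw [coe_specialLinearGroup_apply, ha]
  simp [field]

theorem inv_coe_smul_of_eq_lower (hα : α ≠ 0) (hb : (b : M₂ ℝ) = !![α, 0; δ, α⁻¹]) (z : ℍ) :
    ((b • z : ℍ) : ℂ)⁻¹ = ((α : ℂ) ^ 2 * z)⁻¹ + δ / α := by
  have hα' : (α : ℂ) ≠ 0 := by exact_mod_cast hα
  have hz := ne_zero z
  rw [coe_specialLinearGroup_apply, hb]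
  simp [field, add_comm]

theorem injective_lift_of_upper_lower (hα : α ≠ 0) (ha : (a : M₂ ℝ) = !![α, β; 0, α⁻¹])
    (hb : (b : M₂ ℝ) = !![α, 0; δ, α⁻¹]) (h : α ^ 2 + (α⁻¹) ^ 2 + β * δ ≤ -2) :
    Function.Injective (FreeGroup.lift ![a, b]) := by
  have hβ : β ≠ 0 := by
    rintro rfl
    nlinarith [sq_nonneg α, sq_nonneg α⁻¹]
  -- In the coordinate `p`, `a` is `w ↦ α² w + 1` and `b` is `w⁻¹ ↦ α⁻² w⁻¹ + β δ`.
  let p (z : ℍ) : ℂ := ((α * β)⁻¹ : ℝ) * z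
  have hpa (z : ℍ) : (p (a • z)).re = α ^ 2 * (p z).re + 1 := by
    simp only [p, Complex.re_ofReal_mul, coe_smul_of_eq_upper hα ha, Complex.add_re,
      ← Complex.ofReal_pow, ← Complex.ofReal_mul, Complex.ofReal_re]
    field_simp
  have hpb (z : ℍ) : (p (b • z))⁻¹.re = (α⁻¹) ^ 2 * (p z)⁻¹.re + β * δ := by
    simp only [p, mul_inv, inv_coe_smul_of_eq_lower hα hb, Complex.add_re, ← Complex.ofReal_pow,
      ← Complex.ofReal_inv, Complex.re_ofReal_mul, ← Complex.ofReal_div, Complex.ofReal_re]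
    field_simp
  have hpI : (p I).re = 0 := by simp [p]
  refine injective_lift_pair_of_re_smul p hpI (s := 1 + α ^ 2) (by positivity) ?_ ?_
  · intro z hz
    calc (1 + α ^ 2)⁻¹ = α ^ 2 * -(1 + α ^ 2)⁻¹ + 1 := by field_simp; ring
      _ ≤ α ^ 2 * (p z).re + 1 := by gcongr
      _ = (p (a • z)).re := (hpa z).symm
  · intro z hz
    calc (p (b • z))⁻¹.re = (α⁻¹) ^ 2 * (p z)⁻¹.re + β * δ := hpb z
      _ ≤ (α⁻¹) ^ 2 * (1 + α ^ 2) + β * δ := by gcongr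
      _ = α ^ 2 + (α⁻¹) ^ 2 + β * δ + 2 - (1 + α ^ 2) := by field_simp; ring
      _ ≤ -(1 + α ^ 2) := by linarith

end PingPong

section Balancing

theorem exists_add_inv_eq {t : ℝ} (ht : 2 ≤ |t|) : ∃ α ≠ 0, α + α⁻¹ = t := by
  have hdisc : 0 ≤ discrim 1 (-t) 1 := by
    have h4 : 2 ^ 2 ≤ t ^ 2 := sq_le_sq.2 (by rwa [abs_two])
    rw [discrim]
    linarith
  obtain ⟨α, hα⟩ := exists_quadratic_eq_zero one_ne_zero ⟨_, (Real.mul_self_sqrt hdisc).symm⟩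
  have hα0 : α ≠ 0 := by
    rintro rfl
    simp at hα
  refine ⟨α, hα0, ?_⟩
  field_simp
  linear_combination hα

theorem trace_mul_of_conj_eq_upper_lower {K : Type*} [Field K]
    {g k P : Matrix.SpecialLinearGroup (Fin 2) K} {α β δ : K}
    (hg : ↑(P⁻¹ * g * P) = !![α, β; 0, α⁻¹]) (hk : ↑(P⁻¹ * k * P) = !![α, 0; δ, α⁻¹]) :
    (↑(g * k) : M₂ K).trace = α ^ 2 + (α⁻¹) ^ 2 + β * δ := by
  have hmul : P⁻¹ * (g * k) * P = (P⁻¹ * g * P) * (P⁻¹ * k * P) := by group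
  rw [← trace_conj_inv _ P, hmul, Matrix.SpecialLinearGroup.coe_mul, hg, hk,
    Matrix.mul_fin_two, Matrix.trace_fin_two_of]
  ring

theorem conj_diagonal_eq {K : Type*} [Field K] {a D : Matrix.SpecialLinearGroup (Fin 2) K}
    {ρ p q r s : K} (hρ : ρ ≠ 0) (hD : (D : M₂ K) = !![ρ, 0; 0, ρ⁻¹])
    (ha : (a : M₂ K) = !![p, q; r, s]) :
    ↑(D⁻¹ * a * D) = !![p, q * (ρ⁻¹) ^ 2; r * ρ ^ 2, s] := by
  rw [Matrix.SpecialLinearGroup.coe_mul, Matrix.SpecialLinearGroup.coe_mul,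
    Matrix.SpecialLinearGroup.coe_inv, hD, ha]
  ext i j
  fin_cases i <;> fin_cases j <;> simp [field]

variable {g k : SL2R}

theorem exists_conj_eq_upper_lower_abs_eq {α : ℝ} (hα : α ≠ 0)
    (hg : (g : M₂ ℝ).trace = α + α⁻¹) (hk : (k : M₂ ℝ).trace = α + α⁻¹)
    (hgk : ⁅(g : M₂ ℝ), (k : M₂ ℝ)⁆.det ≠ 0) :
    ∃ (P : SL2R) (β δ : ℝ), ↑(P⁻¹ * g * P) = !![α, β; 0, α⁻¹] ∧
      ↑(P⁻¹ * k * P) = !![α, 0; δ, α⁻¹] ∧ |β| = |δ| := by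
  obtain ⟨P, β, δ, hgP, hkP⟩ := exists_conj_eq_upper_lower hα hg hk hgk
  have hβδ : β * δ ≠ 0 := by
    intro h0
    apply hgk
    rw [det_lie_of_trace_eq g.det_coe k.det_coe (hg.trans hk.symm),
      ← Matrix.SpecialLinearGroup.coe_mul, trace_mul_of_conj_eq_upper_lower hgP hkP, hg, h0]
    field_simp
    ring
  obtain ⟨hβ, hδ⟩ := mul_ne_zero_iff.1 hβδ
  have hq : 0 < |β / δ| := abs_pos.2 (div_ne_zero hβ hδ)
  set ρ := √√|β / δ| with hρ_def
  have hρ : 0 < ρ := Real.sqrt_pos.2 (Real.sqrt_pos.2 hq)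
  have hρ4 : ρ ^ 4 = |β / δ| := by
    rw [hρ_def, pow_mul _ 2 2, Real.sq_sqrt (Real.sqrt_nonneg _), Real.sq_sqrt hq.le]
  let D : SL2R := ⟨!![ρ, 0; 0, ρ⁻¹], by simp [hρ.ne']⟩
  have hconj (a : SL2R) : (P * D)⁻¹ * a * (P * D) = D⁻¹ * (P⁻¹ * a * P) * D := by group
  refine ⟨P * D, β * (ρ⁻¹) ^ 2, δ * ρ ^ 2, ?_, ?_, ?_⟩
  · rw [hconj, conj_diagonal_eq hρ.ne' rfl hgP, zero_mul]
  · rw [hconj, conj_diagonal_eq hρ.ne' rfl hkP, zero_mul]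
  · rw [abs_mul, abs_mul, abs_of_pos (by positivity : 0 < (ρ⁻¹) ^ 2),
      abs_of_pos (by positivity : 0 < ρ ^ 2), inv_pow, mul_inv_eq_iff_eq_mul₀ (by positivity),
      mul_assoc, ← pow_add, hρ4, abs_div, mul_div_cancel₀ _ (abs_ne_zero.2 hδ)]

end Balancing

section FreenessCriterion

theorem trace_inv {R : Type*} [CommRing R] (g : Matrix.SpecialLinearGroup (Fin 2) R) :
    (↑g⁻¹ : M₂ R).trace = (g : M₂ R).trace := by
  simp [Matrix.adjugate_fin_two, Matrix.trace_fin_two, add_comm]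

theorem injective_lift_of_trace_mul_le {g k : SL2R} (htr : (g : M₂ ℝ).trace = (k : M₂ ℝ).trace)
    (hg : 2 ≤ |(g : M₂ ℝ).trace|) (hgk : (↑(g * k) : M₂ ℝ).trace ≤ -2) :
    Function.Injective (FreeGroup.lift ![g, k]) := by
  have h4 : 2 ^ 2 ≤ (g : M₂ ℝ).trace ^ 2 := sq_le_sq.2 (by rwa [abs_two])
  obtain ⟨α, hα, hαg⟩ := exists_add_inv_eq hg
  have hdet : ⁅(g : M₂ ℝ), (k : M₂ ℝ)⁆.det ≠ 0 := by
    rw [det_lie_of_trace_eq g.det_coe k.det_coe htr, ← Matrix.SpecialLinearGroup.coe_mul]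
    exact mul_ne_zero (by linarith) (by linarith)
  obtain ⟨P, β, δ, hgP, hkP⟩ :=
    exists_conj_eq_upper_lower hα hαg.symm (htr ▸ hαg.symm) hdet
  refine injective_lift_pair_of_conj (P := P) (injective_lift_of_upper_lower hα hgP hkP ?_)
  rwa [← trace_mul_of_conj_eq_upper_lower hgP hkP]

theorem injective_lift_conj_of_sq_trace_le {g h : SL2R} (hg : 2 ≤ |(g : M₂ ℝ).trace|)
    (hgh : (g : M₂ ℝ).trace ^ 2 ≤ |⁅(g : M₂ ℝ), (h : M₂ ℝ)⁆.det|) :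
    Function.Injective (FreeGroup.lift ![g, h * g * h⁻¹]) := by
  have h4 : 2 ^ 2 ≤ (g : M₂ ℝ).trace ^ 2 := sq_le_sq.2 (by rwa [abs_two])
  have htr := (trace_conj g h).symm
  rcases le_abs.1 hgh with hpos | hneg
  · refine injective_lift_pair_of_inv (injective_lift_of_trace_mul_le ?_ hg ?_)
    · rw [trace_inv, htr]
    · rw [trace_mul_inv_conj]
      linarith
  · refine injective_lift_of_trace_mul_le htr hg ?_
    rw [trace_mul_conj]
    linarith

end FreenessCriterion

section Displacement

theorem two_mul_cosh_dist_I_smul (a : SL2R) :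
    2 * Real.cosh (dist I (a • I)) =
      (a : M₂ ℝ) 0 0 ^ 2 + (a : M₂ ℝ) 0 1 ^ 2 + (a : M₂ ℝ) 1 0 ^ 2 + (a : M₂ ℝ) 1 1 ^ 2 := by
  have hdet := a.det_coe
  have hw := coe_specialLinearGroup_apply a I
  rw [Matrix.det_fin_two] at hdet
  set w := a • I
  generalize (a : M₂ ℝ) 0 0 = p, (a : M₂ ℝ) 0 1 = q, (a : M₂ ℝ) 1 0 = r,
    (a : M₂ ℝ) 1 1 = s at *
  have hrs : r ^ 2 + s ^ 2 ≠ 0 := by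
    intro h0
    obtain ⟨hr, hs⟩ : r = 0 ∧ s = 0 := by constructor <;> nlinarith
    simp [hr, hs] at hdet
  have hnorm : Complex.normSq (r * Complex.I + s) = r ^ 2 + s ^ 2 := by
    rw [Complex.normSq_apply]
    simp [sq, add_comm]
  simp only [Algebra.algebraMap_self, RingHom.id_apply, coe_I] at hw
  have hre : w.re = (p * r + q * s) / (r ^ 2 + s ^ 2) := by
    rw [← coe_re, hw, Complex.div_re, hnorm]
    simp [field, add_comm]
  have him : w.im = 1 / (r ^ 2 + s ^ 2) := by
    rw [← coe_im, hw, Complex.div_im, hnorm, ← hdet]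
    simp [field]
  rw [cosh_dist', hre, him, I_re, I_im]
  field_simp
  linear_combination -(p * s - q * r + 1) * hdet

theorem dist_smul_eq_dist_conj_smul (P a : SL2R) (x : ℍ) :
    dist (P • x) (a • P • x) = dist x ((P⁻¹ * a * P) • x) := by
  rw [← dist_smul P x, smul_smul, smul_smul, mul_assoc, mul_inv_cancel_left]

theorem sq_trace_sub_two_le_two_mul_cosh_dist (g : SL2R) (x : ℍ) :
    (g : M₂ ℝ).trace ^ 2 - 2 ≤ 2 * Real.cosh (dist x (g • x)) := by
  obtain ⟨P, rfl⟩ := MulAction.exists_smul_eq SL2R I x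
  have hdet := (P⁻¹ * g * P).det_coe
  rw [Matrix.det_fin_two] at hdet
  rw [dist_smul_eq_dist_conj_smul, two_mul_cosh_dist_I_smul, ← trace_conj_inv g P,
    Matrix.trace_fin_two]
  set b := (↑(P⁻¹ * g * P) : M₂ ℝ)
  linarith [sq_nonneg (b 0 1 - b 1 0)]

theorem translationLength_nonneg (g : SL2R) : 0 ≤ translationLength g :=
  Real.iInf_nonneg fun _ ↦ dist_nonneg

theorem sq_trace_sub_two_le_two_mul_cosh_translationLength (g : SL2R) :
    (g : M₂ ℝ).trace ^ 2 - 2 ≤ 2 * Real.cosh (translationLength g) := by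
  have hclosed : IsClosed {r | (g : M₂ ℝ).trace ^ 2 - 2 ≤ 2 * Real.cosh r} :=
    isClosed_le (by fun_prop) (by fun_prop)
  have hmem : translationLength g ∈ closure (Set.range fun x : ℍ ↦ dist x (g • x)) :=
    csInf_mem_closure (Set.range_nonempty _)
      ⟨0, Set.forall_mem_range.2 fun _ ↦ dist_nonneg⟩
  exact hclosed.closure_subset_iff.2
    (Set.range_subset_iff.2 (sq_trace_sub_two_le_two_mul_cosh_dist g)) hmem

theorem exists_two_mul_cosh_dist_eq {g k : SL2R} (htr : (g : M₂ ℝ).trace = (k : M₂ ℝ).trace)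
    (hg : 2 ≤ |(g : M₂ ℝ).trace|) (hgk : ⁅(g : M₂ ℝ), (k : M₂ ℝ)⁆.det ≠ 0) :
    ∃ x : ℍ, ∀ a ∈ ({g, k} : Set SL2R), 2 * Real.cosh (dist x (a • x)) =
      (g : M₂ ℝ).trace ^ 2 - 2 + |(↑(g * k) : M₂ ℝ).trace - ((g : M₂ ℝ).trace ^ 2 - 2)| := by
  obtain ⟨α, hα, hαg⟩ := exists_add_inv_eq hg
  obtain ⟨P, β, δ, hgP, hkP, hβδ⟩ :=
    exists_conj_eq_upper_lower_abs_eq hα hαg.symm (htr ▸ hαg.symm) hgk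
  have htrace : (g : M₂ ℝ).trace ^ 2 - 2 = α ^ 2 + (α⁻¹) ^ 2 := by
    rw [← hαg]
    field_simp
    ring
  have hβ : |β * δ| = β ^ 2 := by rw [abs_mul, ← hβδ, ← sq, sq_abs]
  have hδ : |β * δ| = δ ^ 2 := by rw [abs_mul, hβδ, ← sq, sq_abs]
  refine ⟨P • I, ?_⟩
  rw [trace_mul_of_conj_eq_upper_lower hgP hkP, htrace, add_sub_cancel_left]
  rintro a (rfl | rfl)
  · rw [dist_smul_eq_dist_conj_smul, two_mul_cosh_dist_I_smul, hgP, hβ]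
    simp only [Matrix.of_apply, Matrix.cons_val', Matrix.cons_val_zero, Matrix.cons_val_one,
      Matrix.cons_val_fin_one]
    ring
  · rw [dist_smul_eq_dist_conj_smul, two_mul_cosh_dist_I_smul, hkP, hδ]
    simp only [Matrix.of_apply, Matrix.cons_val', Matrix.cons_val_zero, Matrix.cons_val_one,
      Matrix.cons_val_fin_one]
    ring

end Displacement

section Discreteness

open Filter Topology Matrix
open scoped commutatorElement

theorem commutatorElement_eq_of_upper {K : Type*} [Field K]
    {g h : Matrix.SpecialLinearGroup (Fin 2) K} {a b c d : K} (ha : a ≠ 0) (hc : c ≠ 0)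
    (hg : (g : M₂ K) = !![a, b; 0, a⁻¹]) (hh : (h : M₂ K) = !![c, d; 0, c⁻¹]) :
    (↑⁅g, h⁆ : M₂ K) = !![1, a * b * (1 - c ^ 2) - c * d * (1 - a ^ 2); 0, 1] := by
  rw [commutatorElement_def]
  simp only [Matrix.SpecialLinearGroup.coe_mul, Matrix.SpecialLinearGroup.coe_inv, hg, hh]
  ext i j
  fin_cases i <;> fin_cases j <;> simp [field]
  ring

theorem coe_conj_sub_one {n R : Type*} [Fintype n] [DecidableEq n] [CommRing R]
    (g u : Matrix.SpecialLinearGroup n R) :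
    (↑(g * u * g⁻¹) : Matrix n n R) - 1 =
      (g : Matrix n n R) * (↑u - 1) * (↑g⁻¹ : Matrix n n R) := by
  have hinv : (g : Matrix n n R) * (↑g⁻¹ : Matrix n n R) = 1 := by
    rw [← Matrix.SpecialLinearGroup.coe_mul, mul_inv_cancel, Matrix.SpecialLinearGroup.coe_one]
  rw [mul_sub, mul_one, sub_mul, hinv, Matrix.SpecialLinearGroup.coe_mul,
    Matrix.SpecialLinearGroup.coe_mul]

theorem coe_conj_sub_one_of_upper {K : Type*} [Field K]
    {g u : Matrix.SpecialLinearGroup (Fin 2) K} {a b x : K} (ha : a ≠ 0)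
    (hg : (g : M₂ K) = !![a, b; 0, a⁻¹]) (hu : (u : M₂ K) = !![1, x; 0, 1]) :
    (↑(g * u * g⁻¹) : M₂ K) - 1 = a ^ 2 • (↑u - 1) := by
  rw [coe_conj_sub_one, Matrix.SpecialLinearGroup.coe_inv, hg, hu, one_fin_two]
  ext i j
  fin_cases i <;> fin_cases j <;> simp [field]

theorem conj_eq_inv_of_commute_conj {K : Type*} [Field K]
    {g h : Matrix.SpecialLinearGroup (Fin 2) K} (hcomm : Commute g (h * g * h⁻¹))
    (hdet : ⁅(g : M₂ K), (h : M₂ K)⁆.det ≠ 0) : h * g * h⁻¹ = g⁻¹ := by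
  set k := h * g * h⁻¹ with hk
  have hkh : (k : M₂ K) * (h : M₂ K) = h * g := by
    rw [← Matrix.SpecialLinearGroup.coe_mul, ← Matrix.SpecialLinearGroup.coe_mul, hk,
      inv_mul_cancel_right]
  have htr : (k : M₂ K).trace = (g : M₂ K).trace := trace_conj g h
  have hcoe : (g : M₂ K) * (k : M₂ K) = k * g := by
    rw [← Matrix.SpecialLinearGroup.coe_mul, ← Matrix.SpecialLinearGroup.coe_mul, hcomm.eq]
  have hlie : ((g : M₂ K) - k) * (h : M₂ K) = ⁅(g : M₂ K), (h : M₂ K)⁆ := by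
    rw [sub_mul, hkh, Ring.lie_def]
  have hunit : IsUnit ((g : M₂ K) - k) := by
    rw [isUnit_iff_isUnit_det, isUnit_iff_ne_zero]
    rwa [← hlie, det_mul, h.det_coe, mul_one] at hdet
  have hsum : (g : M₂ K) + k = (g : M₂ K).trace • (1 : M₂ K) := by
    refine hunit.mul_left_cancel ?_
    have hsq := mul_self_eq_trace_smul_sub_one g.det_coe
    have hsq' := mul_self_eq_trace_smul_sub_one k.det_coe
    rw [sub_mul, mul_add, mul_add, hsq, hsq', htr, hcoe, mul_smul_comm, mul_one, smul_sub]
    abel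
  refine eq_inv_of_mul_eq_one_right (Subtype.ext ?_)
  rw [Matrix.SpecialLinearGroup.coe_mul, eq_sub_of_add_eq' hsum, mul_sub, mul_smul_comm, mul_one,
    mul_self_eq_trace_smul_sub_one g.det_coe, sub_sub_cancel, Matrix.SpecialLinearGroup.coe_one]

namespace IsDiscreteSubgroup

variable {Γ : Subgroup SL2R} (hΓ : IsDiscreteSubgroup Γ)

include hΓ

theorem eq_one_of_tendsto {u : ℕ → SL2R} (hu : ∀ n, u n ∈ Γ)
    (hlim : Tendsto (fun n ↦ (u n : M₂ ℝ)) atTop (𝓝 1)) : ∃ n, u n = 1 := by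
  obtain ⟨U, hU, h1, hUΓ⟩ := hΓ
  obtain ⟨n, hn⟩ := (hlim.eventually (hU.mem_nhds h1)).exists
  exact ⟨n, hUΓ _ (hu n) hn⟩

theorem map_conj (P : SL2R) : IsDiscreteSubgroup (Γ.map (MulAut.conj P).toMonoidHom) := by
  obtain ⟨U, hU, h1, hUΓ⟩ := hΓ
  refine ⟨(fun X : M₂ ℝ ↦ (↑P⁻¹ : M₂ ℝ) * X * P) ⁻¹' U, hU.preimage (by fun_prop), ?_, ?_⟩
  · rwa [Set.mem_preimage, mul_one, ← Matrix.SpecialLinearGroup.coe_mul, inv_mul_cancel]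
  · rintro _ ⟨γ, hγ, rfl⟩ hmem
    have hγU : (γ : M₂ ℝ) ∈ U := by
      rw [Set.mem_preimage, ← Matrix.SpecialLinearGroup.coe_mul,
        ← Matrix.SpecialLinearGroup.coe_mul] at hmem
      simpa only [MulEquiv.toMonoidHom_eq_coe, MonoidHom.coe_coe, MulAut.conj_apply, mul_assoc,
        inv_mul_cancel, inv_mul_cancel_left, mul_one] using hmem
    rw [hUΓ γ hγ hγU, map_one]

theorem eq_one_of_coe_conj_sub_one_of_abs_lt_one {g u : SL2R} (hg : g ∈ Γ) (hu : u ∈ Γ) {c : ℝ}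
    (hc : |c| < 1) (h : (↑(g * u * g⁻¹) : M₂ ℝ) - 1 = c • (↑u - 1)) : u = 1 := by
  have hconj (n : ℕ) : (↑(g ^ n * u * (g ^ n)⁻¹) : M₂ ℝ) - 1 = c ^ n • (↑u - 1) := by
    induction n with
    | zero => simp
    | succ n ih =>
      have hsucc : g ^ (n + 1) * u * (g ^ (n + 1))⁻¹ = g * (g ^ n * u * (g ^ n)⁻¹) * g⁻¹ := by
        rw [pow_succ']
        group
      rw [hsucc, coe_conj_sub_one, ih, mul_smul_comm, smul_mul_assoc, ← coe_conj_sub_one, h,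
        smul_smul, pow_succ]
  have hlim : Tendsto (fun n ↦ (↑(g ^ n * u * (g ^ n)⁻¹) : M₂ ℝ)) atTop (𝓝 1) := by
    rw [← tendsto_sub_nhds_zero_iff]
    simpa only [hconj, zero_smul] using
      (tendsto_pow_atTop_nhds_zero_of_abs_lt_one hc).smul_const (↑u - 1 : M₂ ℝ)
  obtain ⟨n, hn⟩ := hΓ.eq_one_of_tendsto
    (fun n ↦ Γ.mul_mem (Γ.mul_mem (Γ.pow_mem hg n) hu) (Γ.inv_mem (Γ.pow_mem hg n))) hlim
  exact conj_eq_one_iff.1 hn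

theorem eq_one_of_coe_conj_sub_one {g u : SL2R} (hg : g ∈ Γ) (hu : u ∈ Γ) {c : ℝ}
    (hc : |c| ≠ 1) (h : (↑(g * u * g⁻¹) : M₂ ℝ) - 1 = c • (↑u - 1)) : u = 1 := by
  rcases hc.lt_or_gt with hlt | hgt
  · exact hΓ.eq_one_of_coe_conj_sub_one_of_abs_lt_one hg hu hlt h
  · have hc0 : c ≠ 0 := abs_pos.1 (one_pos.trans hgt)
    refine conj_eq_one_iff.1 (hΓ.eq_one_of_coe_conj_sub_one_of_abs_lt_one (c := c⁻¹)
      (Γ.inv_mem hg) (Γ.mul_mem (Γ.mul_mem hg hu) (Γ.inv_mem hg)) ?_ ?_)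
    · rw [abs_inv]
      exact inv_lt_one_of_one_lt₀ hgt
    · rw [h, inv_smul_smul₀ hc0]
      simp [mul_assoc]

theorem commute_of_apply_one_zero_eq_zero {g h : SL2R} (hg : g ∈ Γ) (hh : h ∈ Γ)
    (hg0 : g 1 0 = 0) (hh0 : h 1 0 = 0) : Commute g h := by
  obtain ⟨a, b, ha, hg_eq⟩ := g.fin_two_exists_eq_mk_of_apply_zero_one_eq_zero hg0
  obtain ⟨c, d, hc, hh_eq⟩ := h.fin_two_exists_eq_mk_of_apply_zero_one_eq_zero hh0
  have hg_coe := congr_arg ((↑) : SL2R → M₂ ℝ) hg_eq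
  have hh_coe := congr_arg ((↑) : SL2R → M₂ ℝ) hh_eq
  have hu := commutatorElement_eq_of_upper ha hc hg_coe hh_coe
  have hmem : ⁅g, h⁆ ∈ Γ := by
    rw [commutatorElement_def]
    exact Γ.mul_mem (Γ.mul_mem (Γ.mul_mem hg hh) (Γ.inv_mem hg)) (Γ.inv_mem hh)
  rw [commute_iff_eq, ← commutatorElement_eq_one_iff_mul_comm]
  by_cases ha1 : |a ^ 2| = 1
  · by_cases hc1 : |c ^ 2| = 1
    · rw [abs_sq] at ha1 hc1
      refine Subtype.ext ?_
      rw [hu, ha1, hc1]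
      simp [one_fin_two]
    · refine hΓ.eq_one_of_coe_conj_sub_one hh hmem hc1 ?_
      exact coe_conj_sub_one_of_upper hc hh_coe hu
  · refine hΓ.eq_one_of_coe_conj_sub_one hg hmem ha1 ?_
    exact coe_conj_sub_one_of_upper ha hg_coe hu

theorem commute_of_common_eigenvector {g h : SL2R} (hg : g ∈ Γ) (hh : h ∈ Γ) {v : Fin 2 → ℝ}
    (hv : v ≠ 0) {a b : ℝ} (hgv : (g : M₂ ℝ) *ᵥ v = a • v) (hhv : (h : M₂ ℝ) *ᵥ v = b • v) :
    Commute g h := by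
  obtain ⟨P, hP⟩ : ∃ P : SL2R, (P : M₂ ℝ) *ᵥ ![1, 0] = v := by
    have hcop : IsCoprime (v 0) (v 1) := by
      rw [Semifield.isCoprime_iff]
      contrapose! hv
      exact funext (Fin.forall_fin_two.2 hv)
    obtain ⟨P, hP0, hP1⟩ := hcop.exists_SL2_col 0
    refine ⟨P, funext (Fin.forall_fin_two.2 ?_)⟩
    simp [hP0, hP1]
  have hupper {k : SL2R} {c : ℝ} (hk : (k : M₂ ℝ) *ᵥ v = c • v) : (P⁻¹ * k * P) 1 0 = 0 := by
    subst hP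
    simpa using congr_fun (conj_mulVec_eq_smul hk) 1
  have hmem {k : SL2R} (hk : k ∈ Γ) :
      P⁻¹ * k * P ∈ Γ.map (MulAut.conj P⁻¹).toMonoidHom := ⟨k, hk, by simp⟩
  have hcomm := (hΓ.map_conj P⁻¹).commute_of_apply_one_zero_eq_zero (hmem hg) (hmem hh)
    (hupper hgv) (hupper hhv)
  simpa [mul_assoc] using hcomm.map (MulAut.conj P)

theorem commute_of_det_lie_eq_zero {g h : SL2R} (hg : g ∈ Γ) (hh : h ∈ Γ)
    (hdet : ⁅(g : M₂ ℝ), (h : M₂ ℝ)⁆.det = 0) : Commute g h := by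
  rcases commute_or_exists_common_eigenvector g.det_coe h.det_coe hdet with
    hcomm | ⟨v, hv, a, b, hgv, hhv⟩
  · exact Subtype.ext hcomm
  · exact hΓ.commute_of_common_eigenvector hg hh hv hgv hhv

theorem det_lie_conj_ne_zero {g h : SL2R} (hg : g ∈ Γ) (hh : h ∈ Γ)
    (htr : (h : M₂ ℝ).trace ≠ 0) (hgh : ¬ Commute g h) :
    ⁅(g : M₂ ℝ), (↑(h * g * h⁻¹) : M₂ ℝ)⁆.det ≠ 0 := by
  intro hdet
  have hgh0 : ⁅(g : M₂ ℝ), (h : M₂ ℝ)⁆.det ≠ 0 := fun h0 ↦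
    hgh (hΓ.commute_of_det_lie_eq_zero hg hh h0)
  have hcomm : Commute g (h * g * h⁻¹) :=
    hΓ.commute_of_det_lie_eq_zero hg (Γ.mul_mem (Γ.mul_mem hh hg) (Γ.inv_mem hh)) hdet
  have hinv := conj_eq_inv_of_commute_conj hcomm hgh0
  have hcomm_sq : Commute g (h ^ 2) := by
    have hconj : h ^ 2 * g * (h ^ 2)⁻¹ = g := by
      calc h ^ 2 * g * (h ^ 2)⁻¹ = h * (h * g * h⁻¹) * h⁻¹ := by simp [sq, mul_assoc]
        _ = g := by rw [hinv, ← conj_inv, hinv, inv_inv]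
    exact (mul_inv_eq_iff_eq_mul.1 hconj).symm
  have hlie : (h : M₂ ℝ).trace • ⁅(g : M₂ ℝ), (h : M₂ ℝ)⁆ = 0 := by
    have hpow := lie_pow_succ (g : M₂ ℝ) h.det_coe 1
    rw [← Matrix.SpecialLinearGroup.coe_pow, Ring.lie_def, ← Matrix.SpecialLinearGroup.coe_mul,
      ← Matrix.SpecialLinearGroup.coe_mul, hcomm_sq.eq, sub_self] at hpow
    simpa using hpow.symm
  exact hgh0 (by rw [(smul_eq_zero.1 hlie).resolve_left htr, det_zero])

end IsDiscreteSubgroup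

end Discreteness

section VirtuallyAbelian

theorem virtuallyAbelian_closure_pair_of_commute {G : Type*} [Group G] {g h : G}
    (hgh : Commute g h) : VirtuallyAbelian (Subgroup.closure {g, h}) := by
  have hcomm : ∀ x ∈ ({g, h} : Set G), ∀ y ∈ ({g, h} : Set G), x * y = y * x := by
    simpa using ⟨hgh.eq, hgh.eq.symm⟩
  have := Subgroup.isMulCommutative_closure hcomm
  exact ⟨⊤, inferInstance, fun a _ b _ ↦ mul_comm' a b⟩

theorem VirtuallyAbelian.exists_commute_pow {G : Type*} [Group G] (hG : VirtuallyAbelian G)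
    (a b : G) : ∃ m n : ℕ, 0 < m ∧ 0 < n ∧ Commute (a ^ m) (b ^ n) := by
  obtain ⟨H, hH, hcomm⟩ := hG
  obtain ⟨m, hm, -, ha⟩ := Subgroup.exists_pow_mem_of_index_ne_zero hH.index_ne_zero a
  obtain ⟨n, hn, -, hb⟩ := Subgroup.exists_pow_mem_of_index_ne_zero hH.index_ne_zero b
  exact ⟨m, n, hm, hn, hcomm _ ha _ hb⟩

theorem commute_of_commute_pow {g h : SL2R} (hh : 2 ≤ |(h : M₂ ℝ).trace|) {n : ℕ} (hn : 0 < n)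
    (hcomm : Commute g (h ^ n)) : Commute g h := by
  obtain ⟨n, rfl⟩ := Nat.exists_eq_add_one.2 hn
  have hS : (Polynomial.Chebyshev.S ℝ n).eval (h : M₂ ℝ).trace ≠ 0 :=
    abs_pos.1 (n.cast_add_one_pos.trans_le (succ_le_abs_eval_chebyshev_S hh n))
  have hlie := lie_pow_succ (g : M₂ ℝ) h.det_coe n
  rw [← Matrix.SpecialLinearGroup.coe_pow, Ring.lie_def, ← Matrix.SpecialLinearGroup.coe_mul,
    ← Matrix.SpecialLinearGroup.coe_mul, hcomm.eq, sub_self, eq_comm, smul_eq_zero_iff_right hS,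
    Ring.lie_def, sub_eq_zero] at hlie
  exact Subtype.ext hlie

theorem VirtuallyAbelian.commute_of_mem {Γ : Subgroup SL2R} (hΓ : VirtuallyAbelian Γ) {g h : SL2R}
    (hg_mem : g ∈ Γ) (hh_mem : h ∈ Γ) (hg : 2 ≤ |(g : M₂ ℝ).trace|)
    (hh : 2 ≤ |(h : M₂ ℝ).trace|) : Commute g h := by
  obtain ⟨m, n, hm, hn, hcomm⟩ := hΓ.exists_commute_pow ⟨g, hg_mem⟩ ⟨h, hh_mem⟩
  have hcomm_pow : Commute (g ^ m) (h ^ n) := hcomm.map Γ.subtype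
  exact (commute_of_commute_pow hg hm (commute_of_commute_pow hh hn hcomm_pow).symm).symm

end VirtuallyAbelian

section MargulisEstimate

theorem IsMargulisConstant.two_mul_cosh_lt {ε : ℝ} (hε : 0 ≤ ε) (hmarg : IsMargulisConstant ε)
    {Γ : Subgroup SL2R} (hΓ : IsDiscreteSubgroup Γ) {g h : SL2R} (hg_mem : g ∈ Γ) (hh_mem : h ∈ Γ)
    (hg : 2 ≤ |(g : M₂ ℝ).trace|) (hh : (h : M₂ ℝ).trace ≠ 0) (hgh : ¬ Commute g h) :
    2 * Real.cosh ε < (g : M₂ ℝ).trace ^ 2 - 2 + |⁅(g : M₂ ℝ), (h : M₂ ℝ)⁆.det| := by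
  by_contra! hle
  have htr : (↑(h * g * h⁻¹) : M₂ ℝ).trace = (g : M₂ ℝ).trace := trace_conj g h
  have hdet := hΓ.det_lie_conj_ne_zero hg_mem hh_mem hh hgh
  obtain ⟨x, hx⟩ := exists_two_mul_cosh_dist_eq htr.symm hg hdet
  rw [trace_mul_conj, add_sub_cancel_left] at hx
  have hdist (a : SL2R) (ha : a ∈ ({g, h * g * h⁻¹} : Set SL2R)) : dist x (a • x) ≤ ε := by
    rw [← abs_of_nonneg hε, ← abs_of_nonneg dist_nonneg, ← Real.cosh_le_cosh]
    linarith [hx a ha]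
  have hcomm : Commute g (h * g * h⁻¹) := (hmarg Γ hΓ x).commute_of_mem
    (Subgroup.subset_closure ⟨hg_mem, hdist _ (by simp)⟩)
    (Subgroup.subset_closure ⟨Γ.mul_mem (Γ.mul_mem hh_mem hg_mem) (Γ.inv_mem hh_mem),
      hdist _ (by simp)⟩)
    hg (htr ▸ hg)
  refine hdet ?_
  rw [Ring.lie_def, ← Matrix.SpecialLinearGroup.coe_mul, ← Matrix.SpecialLinearGroup.coe_mul,
    hcomm.eq, sub_self, Matrix.det_zero]

theorem sq_mul_abs_det_lie_le_abs_det_lie_pow (A : M₂ ℝ) {B : M₂ ℝ} (hB : B.det = 1)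
    (ht : 2 ≤ |B.trace|) (n : ℕ) : (n : ℝ) ^ 2 * |⁅A, B⁆.det| ≤ |⁅A, B ^ n⁆.det| := by
  cases n with
  | zero => simp
  | succ n =>
    rw [det_lie_pow_succ A hB, abs_mul, abs_pow]
    gcongr
    exact_mod_cast succ_le_abs_eval_chebyshev_S ht n

end MargulisEstimate

theorem case2_free_conjugate_general (ε T : ℝ) (hT : T < ε) (hmarg : IsMargulisConstant ε) :
    ∃ K : ℕ, ∀ g h : SL2R,
      2 ≤ |(g : M₂ ℝ).trace| → 2 ≤ |(h : M₂ ℝ).trace| →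
      translationLength g ≤ T →
      IsDiscreteSubgroup (Subgroup.closure {g, h}) →
      ¬ Commute g h →
      ∀ i ≥ K, Function.Injective
        (FreeGroup.lift
          ![QuotientGroup.mk' (Subgroup.center SL2R) g,
            QuotientGroup.mk' (Subgroup.center SL2R) (h ^ i * g * (h ^ i)⁻¹)]) := by
  obtain ⟨K, hK⟩ := exists_nat_ge ((1 + Real.cosh T) / (Real.cosh ε - Real.cosh T))
  refine ⟨K, fun g h hg hh hgT hΓ hgh i hi ↦ ?_⟩
  have hT0 : 0 ≤ T := (translationLength_nonneg g).trans hgT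
  have hcosh : 0 < Real.cosh ε - Real.cosh T := by
    rw [sub_pos, Real.cosh_lt_cosh, abs_of_nonneg hT0, abs_of_nonneg (hT0.trans hT.le)]
    exact hT
  have htrace : (g : M₂ ℝ).trace ^ 2 - 2 ≤ 2 * Real.cosh T := by
    refine (sq_trace_sub_two_le_two_mul_cosh_translationLength g).trans ?_
    gcongr
    rwa [Real.cosh_le_cosh, abs_of_nonneg (translationLength_nonneg g), abs_of_nonneg hT0]
  have hdet := hmarg.two_mul_cosh_lt (hT0.trans hT.le) hΓ (Subgroup.subset_closure (by simp))
    (Subgroup.subset_closure (by simp)) hg (abs_pos.1 (two_pos.trans_le hh)) hgh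
  refine injective_lift_mk_center_of_injective_lift (injective_lift_conj_of_sq_trace_le hg ?_)
  calc (g : M₂ ℝ).trace ^ 2 ≤ 2 * (1 + Real.cosh T) := by linarith
    _ ≤ 2 * (i * (Real.cosh ε - Real.cosh T)) := by
      gcongr
      exact (div_le_iff₀ hcosh).1 (hK.trans (by exact_mod_cast hi))
    _ = i * (2 * (Real.cosh ε - Real.cosh T)) := by ring
    _ ≤ i ^ 2 * |⁅(g : M₂ ℝ), (h : M₂ ℝ)⁆.det| := by
      gcongr
      · exact_mod_cast Nat.le_self_pow two_ne_zero i
      · linarith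
    _ ≤ |⁅(g : M₂ ℝ), (↑(h ^ i) : M₂ ℝ)⁆.det| := by
      rw [Matrix.SpecialLinearGroup.coe_pow]
      exact sq_mul_abs_det_lie_le_abs_det_lie_pow _ h.det_coe hh i

/-- Theorem 5.3 (thm:Case2) of the paper for `X = ℍ²`: there is a uniform bound `K` such
that for non-elliptic `g, h` generating a discrete nonelementary subgroup with
`τ(g) ≤ ε/10`, the images of `g` and `hⁱ g h⁻ⁱ` in `PSL(2,ℝ)` generate a free group of
rank two for some `1 ≤ i ≤ K`. -/
theorem case2_free_conjugate (ε : ℝ) (hε : 0 < ε) (hmarg : IsMargulisConstant ε) :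
    ∃ K : ℕ, 0 < K ∧ ∀ g h : SL2R,
      NonElliptic g → NonElliptic h →
      translationLength g ≤ ε / 10 →
      IsDiscreteSubgroup (Subgroup.closure {g, h}) →
      ¬ VirtuallyAbelian ↥(Subgroup.closure ({g, h} : Set SL2R)) →
      ∃ i : ℕ, 1 ≤ i ∧ i ≤ K ∧
        Function.Injective
          ⇑(FreeGroup.lift
              ![QuotientGroup.mk' (Subgroup.center SL2R) g,
                QuotientGroup.mk' (Subgroup.center SL2R) (h ^ i * g * (h ^ i)⁻¹)] :
            FreeGroup (Fin 2) →* SL2R ⧸ Subgroup.center SL2R) := by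
  obtain ⟨K, hK⟩ := case2_free_conjugate_general ε (ε / 10) (by linarith) hmarg
  exact ⟨K + 1, K.succ_pos, fun g h hg hh hgT hΓ hVA ↦ ⟨K + 1, K.succ_pos, le_rfl,
    hK g h hg.1 hh.1 hgT hΓ (mt virtuallyAbelian_closure_pair_of_commute hVA) _ K.le_succ⟩⟩
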